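/- arXiv:2007.02223 — 3 statements merged into one kernel-verified Lean document; each statement's English description precedes it below -/
import Mathlib

section
/- Let H ∈ (1/2,1), let γ > 3−2H, let T > 0, and let λ_i := i²π² for integers i ≥ 1. Then there exists a constant C depending only on H, γ and T such that for every t ∈ [0,T], ∑_{i=1}^{∞} [ λ_i^{(2H−γ+1)/2} ∫₀ᵗ ∫₀ᵗ e^{−λ_i(t−u)} e^{−λ_i(t−v)} H(2H−1)|u−v|^{2H−2} du dv ]^{1/2} ≤ C. -/
/-!
Write `r = 2H - 2 ∈ (-1, 0)`. The double integral `I(L)` at `L = λ_i` satisfies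
`I(L) ≤ c · L⁻¹ ^ (r + 2) = c · L ^ (-2H)` with `c` independent of `t`, as the scaling
`u ↦ u / L` suggests. To see this, split the kernel at the scale `L⁻¹`:
`e^{-L(t-u)} |u-v|^r` is at most `|u-v|^r` on `|u-v| ≤ L⁻¹` plus `L⁻¹ ^ r · e^{-L(t-u)}`
everywhere. Both pieces have `u`-integral at most a constant times `L⁻¹ ^ (r + 1)`, uniformly
in `v` (`inner_integral_le`), and the remaining factor `e^{-L(t-v)}` contributes another `L⁻¹`
(`double_integral_le`).

Hence the `i`-th term of the series is at most a constant times
`λ_i ^ ((1 - 2H - γ)/4)`, that is, a constant times `i ^ ((1 - 2H - γ)/2)`, and this is summable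
exactly because `γ > 3 - 2H`.
-/

open Real MeasureTheory

/-- The part of the kernel `|x|^r` within distance `δ` of the singularity. -/
noncomputable def nearKernel (r δ x : ℝ) : ℝ :=
  (Set.Iic δ).indicator (fun y : ℝ => y ^ r) |x|

lemma nearKernel_nonneg (r δ x : ℝ) : 0 ≤ nearKernel r δ x := by
  unfold nearKernel Set.indicator
  split_ifs
  · positivity
  · exact le_rfl

lemma integral_nearKernel {r δ : ℝ} (hr : -1 < r) (hδ : 0 < δ) :
    ∫ x, nearKernel r δ x = 2 * (δ ^ (r + 1) / (r + 1)) := by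
  unfold nearKernel
  rw [integral_comp_abs (f := (Set.Iic δ).indicator (fun y : ℝ => y ^ r)),
    setIntegral_indicator measurableSet_Iic, Set.Ioi_inter_Iic,
    ← intervalIntegral.integral_of_le hδ.le, integral_rpow (Or.inl hr),
    Real.zero_rpow (by linarith), sub_zero]

lemma integrable_nearKernel {r δ : ℝ} (hr : -1 < r) (hδ : 0 < δ) :
    Integrable (nearKernel r δ) := by
  -- A function with nonzero Bochner integral is integrable.
  refine Integrable.of_integral_ne_zero ?_
  rw [integral_nearKernel hr hδ]
  have : 0 < r + 1 := by linarith
  positivity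

lemma rpow_abs_le {r δ : ℝ} (hr : r ≤ 0) (hδ : 0 < δ) {e : ℝ} (he0 : 0 ≤ e) (he1 : e ≤ 1)
    (x : ℝ) : e * |x| ^ r ≤ nearKernel r δ x + δ ^ r * e := by
  have hδr : 0 ≤ δ ^ r * e := by positivity
  by_cases hx : |x| ≤ δ
  · have h1 : nearKernel r δ x = |x| ^ r := by simp [nearKernel, hx]
    have h2 : e * |x| ^ r ≤ 1 * |x| ^ r := by gcongr
    linarith
  · have h1 := nearKernel_nonneg r δ x
    have h2 : |x| ^ r ≤ δ ^ r := Real.rpow_le_rpow_of_nonpos hδ (not_le.1 hx).le hr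
    nlinarith [mul_le_mul_of_nonneg_left h2 he0]

lemma integral_exp_decay_le {L t : ℝ} (hL : 0 < L) :
    ∫ u in (0:ℝ)..t, Real.exp (-L * (t - u)) ≤ L⁻¹ := by
  have h : ∀ u ∈ Set.uIcc 0 t, HasDerivAt (fun u => L⁻¹ * Real.exp (-L * (t - u)))
      (Real.exp (-L * (t - u))) u := by
    intro u _
    have h1 : HasDerivAt (fun u => -L * (t - u)) (-L * (-1)) u :=
      ((hasDerivAt_id u).const_sub t).const_mul (-L)
    have h2 : L⁻¹ * (Real.exp (-L * (t - u)) * (-L * (-1))) = Real.exp (-L * (t - u)) := by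
      field_simp
    exact h2 ▸ h1.exp.const_mul L⁻¹
  rw [intervalIntegral.integral_eq_sub_of_hasDerivAt h
    (Continuous.intervalIntegrable (by fun_prop) _ _)]
  simp only [sub_self, mul_zero, Real.exp_zero, mul_one]
  have : 0 ≤ L⁻¹ * Real.exp (-L * (t - 0)) := by positivity
  linarith

lemma inner_integral_le {r L t : ℝ} (hr : -1 < r) (hr0 : r ≤ 0) (hL : 0 < L) (ht : 0 ≤ t)
    (v : ℝ) :
    |∫ u in (0:ℝ)..t, Real.exp (-L * (t - u)) * |u - v| ^ r|
      ≤ (2 / (r + 1) + 1) * L⁻¹ ^ (r + 1) := by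
  have hδ : 0 < L⁻¹ := by positivity
  have hk : Integrable (fun u => nearKernel r L⁻¹ (u - v)) :=
    (integrable_nearKernel hr hδ).comp_sub_right v
  have he : IntervalIntegrable (fun u => L⁻¹ ^ r * Real.exp (-L * (t - u))) volume 0 t :=
    Continuous.intervalIntegrable (by fun_prop) _ _
  have h1 : ‖∫ u in (0:ℝ)..t, Real.exp (-L * (t - u)) * |u - v| ^ r‖ ≤
      ∫ u in (0:ℝ)..t, (nearKernel r L⁻¹ (u - v) + L⁻¹ ^ r * Real.exp (-L * (t - u))) := by
    refine intervalIntegral.norm_integral_le_of_norm_le ht ?_ (hk.intervalIntegrable.add he)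
    refine Filter.Eventually.of_forall fun u hu => ?_
    rw [Real.norm_of_nonneg (by positivity)]
    refine rpow_abs_le hr0 hδ (Real.exp_pos _).le (Real.exp_le_one_iff.2 ?_) _
    nlinarith [mul_nonneg hL.le (sub_nonneg.2 hu.2)]
  rw [Real.norm_eq_abs, intervalIntegral.integral_add hk.intervalIntegrable he,
    intervalIntegral.integral_const_mul] at h1
  have h2 : ∫ u in (0:ℝ)..t, nearKernel r L⁻¹ (u - v) ≤ 2 * (L⁻¹ ^ (r + 1) / (r + 1)) := by
    rw [intervalIntegral.integral_of_le ht, ← integral_nearKernel hr hδ,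
      ← integral_sub_right_eq_self (nearKernel r L⁻¹) v]
    exact setIntegral_le_integral hk
      (Filter.Eventually.of_forall fun u => nearKernel_nonneg _ _ _)
  have h3 : L⁻¹ ^ r * ∫ u in (0:ℝ)..t, Real.exp (-L * (t - u)) ≤ L⁻¹ ^ r * L⁻¹ := by
    gcongr
    exact integral_exp_decay_le hL
  rw [← Real.rpow_add_one hδ.ne'] at h3
  calc _ ≤ _ := h1
    _ ≤ 2 * (L⁻¹ ^ (r + 1) / (r + 1)) + L⁻¹ ^ (r + 1) := add_le_add h2 h3
    _ = _ := by ring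

lemma double_integral_le {r L t m : ℝ} (hr : -1 < r) (hr0 : r ≤ 0) (hL : 0 < L) (ht : 0 ≤ t)
    (hm : 0 ≤ m) :
    ∫ v in (0:ℝ)..t, ∫ u in (0:ℝ)..t,
      Real.exp (-L * (t - u)) * Real.exp (-L * (t - v)) * (m * |u - v| ^ r)
      ≤ m * (2 / (r + 1) + 1) * L⁻¹ ^ (r + 2) := by
  have hδ : 0 < L⁻¹ := by positivity
  have hr1 : 0 < r + 1 := by linarith
  set K := (2 / (r + 1) + 1) * L⁻¹ ^ (r + 1) with hK
  have hK0 : 0 ≤ K := by positivity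
  refine (le_abs_self _).trans ?_
  rw [← Real.norm_eq_abs]
  calc _ ≤ ∫ v in (0:ℝ)..t, m * K * Real.exp (-L * (t - v)) := by
        refine intervalIntegral.norm_integral_le_of_norm_le ht ?_
          (Continuous.intervalIntegrable (by fun_prop) _ _)
        refine Filter.Eventually.of_forall fun v _ => ?_
        have : ∀ u, Real.exp (-L * (t - u)) * Real.exp (-L * (t - v)) * (m * |u - v| ^ r) =
            (m * Real.exp (-L * (t - v))) * (Real.exp (-L * (t - u)) * |u - v| ^ r) :=
          fun u => by ring
        simp_rw [this]
        rw [intervalIntegral.integral_const_mul, norm_mul, Real.norm_of_nonneg (by positivity),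
          Real.norm_eq_abs, mul_right_comm m K]
        gcongr
        exact inner_integral_le hr hr0 hL ht v
    _ ≤ m * K * L⁻¹ := by
        rw [intervalIntegral.integral_const_mul]
        gcongr
        exact integral_exp_decay_le hL
    _ = _ := by
        rw [hK, show r + 2 = (r + 1) + 1 by ring, Real.rpow_add_one hδ.ne' (r + 1)]
        ring

/-- After extracting the square root, the bound on the `i`-th term is a pure power of `i + 1`. -/
lemma sqrt_weight_eq {H γ c x : ℝ} (hc : 0 ≤ c) (hx : 0 < x) :
    Real.sqrt ((x ^ 2 * Real.pi ^ 2) ^ ((2 * H - γ + 1) / 2) *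
      (c * (x ^ 2 * Real.pi ^ 2)⁻¹ ^ (2 * H - 2 + 2))) =
      Real.sqrt c * Real.pi ^ ((1 - 2 * H - γ) / 2) * x ^ ((1 - 2 * H - γ) / 2) := by
  have hp := Real.pi_pos
  have hxp : 0 < x * Real.pi := by positivity
  rw [← mul_pow, Real.inv_rpow (by positivity), ← Real.rpow_neg (by positivity), mul_left_comm,
    ← Real.rpow_add (by positivity), Real.sqrt_mul hc, Real.sqrt_eq_rpow (_ ^ _),
    ← Real.rpow_mul (by positivity), ← Real.rpow_natCast, ← Real.rpow_mul hxp.le, mul_assoc,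
    ← Real.mul_rpow hp.le hx.le, mul_comm Real.pi x]
  congr 2
  push_cast
  ring

/-- Summability of the weighted stochastic-convolution variances: for `H ∈ (1/2,1)`,
`γ > 3-2H`, `T > 0` and `λ_i = i²π²`, there is `C = C(H,γ,T)` such that for every
`t ∈ [0,T]`,
`∑ᵢ [λ_i^((2H-γ+1)/2) ∫₀ᵗ∫₀ᵗ e^{-λ_i(t-u)} e^{-λ_i(t-v)} H(2H-1)|u-v|^(2H-2) du dv]^(1/2) ≤ C`. -/
theorem summed_sqrt_variance_bound
    (H γ T : ℝ) (hH : H ∈ Set.Ioo (1/2 : ℝ) 1) (hγ : 3 - 2*H < γ) (hT : 0 < T) :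
    ∃ C : ℝ, 0 < C ∧ ∀ t : ℝ, t ∈ Set.Icc 0 T →
      (∑' i : ℕ, Real.sqrt ((((i:ℝ)+1)^2 * Real.pi^2) ^ ((2*H - γ + 1)/2) *
        ∫ v in (0:ℝ)..t, ∫ u in (0:ℝ)..t,
          Real.exp (-(((i:ℝ)+1)^2 * Real.pi^2)*(t-u)) *
            Real.exp (-(((i:ℝ)+1)^2 * Real.pi^2)*(t-v)) *
              (H * (2*H - 1) * |u - v| ^ (2*H - 2))))
      ≤ C := by
  obtain ⟨hH1, hH2⟩ := hH
  have hr1 : -1 < 2 * H - 2 := by linarith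
  have hm : 0 ≤ H * (2 * H - 1) := mul_nonneg (by linarith) (by linarith)
  set c := H * (2 * H - 1) * (2 / (2 * H - 2 + 1) + 1) with hc
  have hc0 : 0 ≤ c := by
    have : 0 < 2 * H - 2 + 1 := by linarith
    positivity
  set b : ℕ → ℝ := fun i => Real.sqrt c * Real.pi ^ ((1 - 2 * H - γ) / 2) *
    ((i : ℝ) + 1) ^ ((1 - 2 * H - γ) / 2) with hb
  have hbs : Summable b := by
    refine Summable.mul_left _ ?_
    have h := (summable_nat_add_iff 1).2
      (Real.summable_nat_rpow.2 (show (1 - 2 * H - γ) / 2 < -1 by linarith))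
    simpa using h
  have hb0 : ∀ i, 0 ≤ b i := fun i => by positivity
  have hB : 0 ≤ ∑' i, b i := tsum_nonneg hb0
  refine ⟨(∑' i, b i) + 1, by linarith, fun t ht => ?_⟩
  have key : ∀ i : ℕ, Real.sqrt ((((i:ℝ)+1)^2 * Real.pi^2) ^ ((2*H - γ + 1)/2) *
        ∫ v in (0:ℝ)..t, ∫ u in (0:ℝ)..t,
          Real.exp (-(((i:ℝ)+1)^2 * Real.pi^2)*(t-u)) *
            Real.exp (-(((i:ℝ)+1)^2 * Real.pi^2)*(t-v)) *
              (H * (2*H - 1) * |u - v| ^ (2*H - 2))) ≤ b i := by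
    intro i
    have hx : (0:ℝ) < (i:ℝ) + 1 := by positivity
    rw [hb]
    dsimp only
    rw [← sqrt_weight_eq hc0 hx]
    gcongr
    exact double_integral_le hr1 (by linarith) (by positivity) ht.1 hm
  have := Summable.tsum_le_tsum key
    (Summable.of_nonneg_of_le (fun _ => Real.sqrt_nonneg _) key hbs) hbs
  linarith
end

section
/- Let H ∈ (1/2,1), T > 0, and λ_i := i²π² for integers i ≥ 1. There exists a constant C depending only on H and T such that for every step size h > 0 and every natural number n with nh ≤ T, writing ⌊s⌋_h := h·⌊s/h⌋, one has ∑_{i=1}^{∞} ∫₀^{nh} ∫₀^{nh} ∫_{⌊s₁⌋_h}^{s₁} ∫_{⌊s₂⌋_h}^{s₂} e^{−λ_i(nh−s₁)} e^{−λ_i(nh−s₂)} |σ₁−σ₂|^{2H−2} dσ₂ dσ₁ ds₂ ds₁ ≤ C h². -/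
/-!
Write `N = n h`, `k(σ₁, σ₂) = |σ₁ - σ₂|^(2H-2)` and `e(s) = exp (-λ (N - s))`. All estimates are
carried out in `ℝ≥0∞`, where no integrability has to be checked:
`‖∫ f‖ₑ ≤ ∫⁻ ‖f‖ₑ` holds for every `f`.

The inner integration regions `(⌊s⌋_h, s]` are contained in `(s - h, s] ∩ (0, N]`, so each summand is
at most `∫∫ e(s₁) e(s₂) G(s₁, s₂)`, where `G(s₁, s₂)` is the integral of `k` over the product of the
two windows. By `e(s₁) e(s₂) ≤ e(s₁)² + e(s₂)²` and the symmetry of `G`, this is at most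
`2 ∫ e(s₁)² (∫ G(s₁, s₂) ds₂) ds₁`. By Tonelli, integrating `s₂` over its window costs a factor `h`,
integrating `k` over `σ₂ ∈ (0, N]` costs a constant `K` because `2H - 2 > -1`, and integrating `σ₁`
over its window costs another `h` (`lintegral_schur`). Finally `∫ e² ≤ 1 / (2 λ)`, and `∑ 1 / λ_i`
converges. The argument only needs `K` to be bounded in terms of `H` and `T`
(`exists_kernel_bound`).
-/

open Real MeasureTheory
open scoped ENNReal

/-- Indicator of the window `(s - h, s]` in the variable `σ`, as a function of `(s, σ)`. -/
noncomputable def window (h s σ : ℝ) : ℝ≥0∞ :=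
  {p : ℝ × ℝ | p.1 - h < p.2 ∧ p.2 ≤ p.1}.indicator 1 (s, σ)

lemma measurable_window (h : ℝ) : Measurable (fun p : ℝ × ℝ => window h p.1 p.2) := by
  refine Measurable.indicator measurable_const ?_
  exact (measurableSet_lt (measurable_fst.sub_const h) measurable_snd).inter
    (measurableSet_le measurable_snd measurable_fst)

lemma lintegral_window_right (h s : ℝ) (S : Set ℝ) :
    ∫⁻ σ in S, window h s σ ≤ ENNReal.ofReal h := by
  have : (fun σ => window h s σ) = (Set.Ioc (s - h) s).indicator 1 := by
    ext σ; simp [window, Set.indicator]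
  rw [this, lintegral_indicator_one measurableSet_Ioc]
  exact (Measure.restrict_apply_le _ _).trans (by simp)

lemma lintegral_window_left (h σ : ℝ) (S : Set ℝ) :
    ∫⁻ s in S, window h s σ ≤ ENNReal.ofReal h := by
  have : (fun s => window h s σ) = (Set.Ico σ (σ + h)).indicator 1 := by
    ext s
    simp only [window, Set.indicator, Set.mem_ofPred_eq, Set.mem_Ico, sub_lt_iff_lt_add,
      and_comm (a := s < σ + h), Pi.one_apply]
  rw [this, lintegral_indicator_one measurableSet_Ico]
  exact (Measure.restrict_apply_le _ _).trans (by simp)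

/-- Schur-type bound: a quadratic form in `e` whose symmetric kernel is built from `k` and two
windows is controlled by the `L²` norm of `e`. -/
lemma lintegral_schur (μ : Measure ℝ) [SFinite μ] (e : ℝ → ℝ≥0∞) (w k : ℝ → ℝ → ℝ≥0∞)
    (he : Measurable e) (hw : Measurable fun p : ℝ × ℝ => w p.1 p.2)
    (hk : Measurable fun p : ℝ × ℝ => k p.1 p.2) (hsymm : ∀ x y, k x y = k y x)
    (h K : ℝ≥0∞) (hw₁ : ∀ σ, ∫⁻ s, w s σ ∂μ ≤ h) (hw₂ : ∀ s, ∫⁻ σ, w s σ ∂μ ≤ h)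
    (hK : ∀ x, ∫⁻ y, k x y ∂μ ≤ K) :
    ∫⁻ s₁, ∫⁻ s₂, e s₁ * e s₂ * ∫⁻ σ₁, ∫⁻ σ₂, w s₁ σ₁ * w s₂ σ₂ * k σ₁ σ₂ ∂μ ∂μ ∂μ ∂μ
      ≤ 2 * (h * (h * K) * ∫⁻ s, e s ^ 2 ∂μ) := by
  have hw' : ∀ {α : Type} [MeasurableSpace α] {f g : α → ℝ}, Measurable f → Measurable g →
      Measurable fun a => w (f a) (g a) := fun hf hg => hw.comp (hf.prodMk hg)
  have hk' : ∀ {α : Type} [MeasurableSpace α] {f g : α → ℝ}, Measurable f → Measurable g →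
      Measurable fun a => k (f a) (g a) := fun hf hg => hk.comp (hf.prodMk hg)
  set G : ℝ → ℝ → ℝ≥0∞ := fun s₁ s₂ =>
    ∫⁻ σ₁, ∫⁻ σ₂, w s₁ σ₁ * w s₂ σ₂ * k σ₁ σ₂ ∂μ ∂μ with hG
  have hGm : Measurable fun p : ℝ × ℝ => G p.1 p.2 := by
    refine Measurable.lintegral_prod_right' (f := fun q : (ℝ × ℝ) × ℝ =>
      ∫⁻ σ₂, w q.1.1 q.2 * w q.1.2 σ₂ * k q.2 σ₂ ∂μ) ?_
    refine Measurable.lintegral_prod_right' (f := fun q : ((ℝ × ℝ) × ℝ) × ℝ =>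
      w q.1.1.1 q.1.2 * w q.1.1.2 q.2 * k q.1.2 q.2) ?_
    exact ((hw' (by fun_prop) (by fun_prop)).mul (hw' (by fun_prop) (by fun_prop))).mul
      (hk' (by fun_prop) (by fun_prop))
  have hGs : ∀ x y, G x y = G y x := by
    intro x y
    simp only [hG]
    rw [lintegral_lintegral_swap]
    · refine lintegral_congr fun a => lintegral_congr fun b => ?_
      rw [hsymm b a, mul_comm (w x b)]
    · exact (((hw' (by fun_prop) (by fun_prop)).mul (hw' (by fun_prop) (by fun_prop))).mul
        (hk' (by fun_prop) (by fun_prop))).aemeasurable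
  have hGb : ∀ s₁, ∫⁻ s₂, G s₁ s₂ ∂μ ≤ h * (h * K) := by
    intro s₁
    simp only [hG]
    rw [lintegral_lintegral_swap]
    · calc _ ≤ ∫⁻ σ₁, w s₁ σ₁ * (h * K) ∂μ := by
            refine lintegral_mono fun σ₁ => ?_
            rw [lintegral_lintegral_swap]
            · calc _ = ∫⁻ σ₂, (w s₁ σ₁ * k σ₁ σ₂) * ∫⁻ s₂, w s₂ σ₂ ∂μ ∂μ := by
                    refine lintegral_congr fun σ₂ => ?_
                    rw [← lintegral_const_mul _ (hw' (by fun_prop) (by fun_prop))]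
                    refine lintegral_congr fun s₂ => ?_
                    ring
                _ ≤ ∫⁻ σ₂, (w s₁ σ₁ * h) * k σ₁ σ₂ ∂μ := by
                    refine lintegral_mono fun σ₂ => ?_
                    calc _ ≤ (w s₁ σ₁ * k σ₁ σ₂) * h := by gcongr; exact hw₁ _
                      _ = _ := by ring
                _ = (w s₁ σ₁ * h) * ∫⁻ σ₂, k σ₁ σ₂ ∂μ :=
                    lintegral_const_mul _ (hk' (by fun_prop) (by fun_prop))
                _ ≤ _ := by rw [mul_assoc]; gcongr; exact hK _
            · exact (((hw' (by fun_prop) (by fun_prop)).mul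
                (hw' (by fun_prop) (by fun_prop))).mul
                (hk' (by fun_prop) (by fun_prop))).aemeasurable
        _ = (∫⁻ σ₁, w s₁ σ₁ ∂μ) * (h * K) :=
            lintegral_mul_const _ (hw' (by fun_prop) (by fun_prop))
        _ ≤ _ := by gcongr; exact hw₂ _
    · refine Measurable.aemeasurable ?_
      refine Measurable.lintegral_prod_right' (f := fun q : (ℝ × ℝ) × ℝ =>
        w s₁ q.1.2 * w q.1.1 q.2 * k q.1.2 q.2) ?_
      exact ((hw' (by fun_prop) (by fun_prop)).mul (hw' (by fun_prop) (by fun_prop))).mul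
        (hk' (by fun_prop) (by fun_prop))
  have hA : ∫⁻ s₁, ∫⁻ s₂, e s₁ ^ 2 * G s₁ s₂ ∂μ ∂μ ≤ h * (h * K) * ∫⁻ s, e s ^ 2 ∂μ := by
    rw [← lintegral_const_mul _ (he.pow_const 2)]
    refine lintegral_mono fun s₁ => ?_
    rw [lintegral_const_mul (e s₁ ^ 2) (f := fun s₂ => G s₁ s₂)
      (hGm.comp measurable_prodMk_left), mul_comm]
    gcongr
    exact hGb s₁
  have hmeas : Measurable fun p : ℝ × ℝ => e p.1 ^ 2 * G p.1 p.2 :=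
    ((he.comp measurable_fst).pow_const 2).mul hGm
  calc _ ≤ ∫⁻ s₁, ∫⁻ s₂, (e s₁ ^ 2 * G s₁ s₂ + e s₂ ^ 2 * G s₂ s₁) ∂μ ∂μ := by
        refine lintegral_mono fun s₁ => lintegral_mono fun s₂ => ?_
        change e s₁ * e s₂ * G s₁ s₂ ≤ _
        rw [hGs s₂ s₁, ← add_mul]
        gcongr
        rcases le_total (e s₁) (e s₂) with hle | hle
        · refine le_add_left ?_
          rw [sq]; gcongr
        · refine le_add_right ?_
          rw [sq]; gcongr
    _ = ∫⁻ s₁, ∫⁻ s₂, e s₁ ^ 2 * G s₁ s₂ ∂μ ∂μ + ∫⁻ s₁, ∫⁻ s₂, e s₂ ^ 2 * G s₂ s₁ ∂μ ∂μ := by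
        rw [← lintegral_add_left hmeas.lintegral_prod_right']
        refine lintegral_congr fun s₁ => ?_
        exact lintegral_add_left (f := fun s₂ => e s₁ ^ 2 * G s₁ s₂)
          (hmeas.comp measurable_prodMk_left) _
    _ = 2 * ∫⁻ s₁, ∫⁻ s₂, e s₁ ^ 2 * G s₁ s₂ ∂μ ∂μ := by
        rw [two_mul]
        congr 1
        exact lintegral_lintegral_swap (f := fun s₁ s₂ => e s₂ ^ 2 * G s₂ s₁)
          (hmeas.comp measurable_swap).aemeasurable
    _ ≤ _ := by gcongr

/-- The singular kernel `|x - y|^r`, `r > -1`, integrates over `(0, N] ⊆ (0, T]` to at most a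
constant, uniformly in `x` and `N`. -/
lemma exists_kernel_bound (r T : ℝ) (hr : -1 < r) (hr0 : r < 0) :
    ∃ K : ℝ, 0 < K ∧ ∀ x N : ℝ, N ≤ T →
      ∫⁻ y in Set.Ioc 0 N, ENNReal.ofReal (|x - y| ^ r) ≤ ENNReal.ofReal K := by
  set f : ℝ → ℝ≥0∞ := (Set.Ioc (-1 : ℝ) 1).indicator fun z => ENNReal.ofReal (|z| ^ r) with hf
  have hfin : ∫⁻ z, f z < ⊤ := by
    rw [hf, lintegral_indicator measurableSet_Ioc]
    have h1 : IntervalIntegrable (fun z : ℝ => |z| ^ r) volume (-1) 1 := by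
      refine intervalIntegrable_of_even (f := fun z : ℝ => |z| ^ r) (fun x => by simp) (fun x hx => ?_)
        enorm_ne_top enorm_ne_top
      refine (intervalIntegral.intervalIntegrable_rpow' hr).congr ?_
      intro z hz
      rw [Set.uIoc_of_le hx.le] at hz
      simp [abs_of_pos hz.1]
    have h2 := (intervalIntegrable_iff_integrableOn_Ioc_of_le (by norm_num)).1 h1
    exact (hasFiniteIntegral_iff_ofReal
      (Filter.Eventually.of_forall fun z => by positivity)).1 h2.2
  refine ⟨(∫⁻ z, f z).toReal + max T 0 + 1, by positivity, fun x N hN => ?_⟩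
  -- `|x - y| ^ r ≤ 1` away from the unit neighbourhood of the singularity.
  calc _ ≤ ∫⁻ y in Set.Ioc 0 N, (f (x - y) + 1) := by
        refine lintegral_mono fun y => ?_
        by_cases hy : x - y ∈ Set.Ioc (-1 : ℝ) 1
        · simp [hf, hy]
        · refine le_add_left ?_
          rw [← ENNReal.ofReal_one]
          refine ENNReal.ofReal_le_ofReal (Real.rpow_le_one_of_one_le_of_nonpos ?_ hr0.le)
          by_contra! hlt
          exact hy ⟨(abs_lt.1 hlt).1, (abs_lt.1 hlt).2.le⟩
    _ = (∫⁻ y in Set.Ioc 0 N, f (x - y)) + ENNReal.ofReal N := by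
        rw [lintegral_add_right _ measurable_const]
        simp
    _ ≤ (∫⁻ z, f z) + ENNReal.ofReal (max T 0) := by
        refine add_le_add ?_ (ENNReal.ofReal_le_ofReal (hN.trans (le_max_left _ _)))
        rw [← lintegral_sub_left_eq_self f x]
        exact setLIntegral_le_lintegral _ _
    _ ≤ _ := by
        rw [add_assoc, ENNReal.ofReal_add (by positivity) (by positivity),
          ENNReal.ofReal_toReal hfin.ne]
        gcongr
        linarith

lemma lintegral_exp_sq_le (l N : ℝ) (hl : 0 < l) (hN : 0 ≤ N) :
    ∫⁻ s in Set.Ioc 0 N, ENNReal.ofReal (Real.exp (-l * (N - s))) ^ 2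
      ≤ ENNReal.ofReal (1 / (2 * l)) := by
  have hd : ∀ s ∈ Set.uIcc 0 N, HasDerivAt (fun s => Real.exp (-l * (N - s)) ^ 2 / (2 * l))
      (Real.exp (-l * (N - s)) ^ 2) s := by
    intro s _
    have h1 : HasDerivAt (fun s => -l * (N - s)) (-l * (0 - 1)) s :=
      (((hasDerivAt_const s N).sub (hasDerivAt_id s)).const_mul (-l))
    refine ((h1.exp.pow 2).div_const (2 * l)).congr_deriv ?_
    rw [div_eq_iff (by positivity)]
    push_cast
    ring
  have hc : Continuous fun s => Real.exp (-l * (N - s)) ^ 2 := by fun_prop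
  have hint := intervalIntegral.integral_eq_sub_of_hasDerivAt hd (hc.intervalIntegrable _ _)
  rw [intervalIntegral.integral_of_le hN] at hint
  simp_rw [← ENNReal.ofReal_pow (Real.exp_nonneg _)]
  rw [← ofReal_integral_eq_lintegral_ofReal (hc.integrableOn_Ioc)
    (Filter.Eventually.of_forall fun s => by positivity), hint]
  refine ENNReal.ofReal_le_ofReal ?_
  have : 0 ≤ Real.exp (-l * (N - 0)) ^ 2 / (2 * l) := by positivity
  simp only [sub_self, mul_zero, Real.exp_zero, one_pow]
  linarith

lemma enorm_intervalIntegral_le (f : ℝ → ℝ) {a b : ℝ} (hab : a ≤ b) :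
    ‖∫ x in a..b, f x‖ₑ ≤ ∫⁻ x in Set.Ioc a b, ‖f x‖ₑ := by
  rw [intervalIntegral.integral_of_le hab]
  exact enorm_integral_le_lintegral_enorm _

/-- The region `(⌊s⌋_h, s]` lies in the window `(s - h, s]` and in `(0, N]`. -/
lemma enorm_integral_floor_le (f : ℝ → ℝ) {h s N : ℝ} (hh : 0 < h) (hs : s ∈ Set.Ioc 0 N) :
    ‖∫ σ in (h * (⌊s / h⌋ : ℝ))..s, f σ‖ₑ
      ≤ ∫⁻ σ in Set.Ioc 0 N, window h s σ * ‖f σ‖ₑ := by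
  have h0 : 0 ≤ h * (⌊s / h⌋ : ℝ) := by
    have : (0 : ℤ) ≤ ⌊s / h⌋ := Int.floor_nonneg.2 (div_nonneg hs.1.le hh.le)
    have : (0 : ℝ) ≤ (⌊s / h⌋ : ℝ) := by exact_mod_cast this
    positivity
  have h1 : h * (⌊s / h⌋ : ℝ) ≤ s := by
    calc _ ≤ h * (s / h) := by gcongr; exact Int.floor_le _
      _ = s := by field_simp
  have h2 : s - h ≤ h * (⌊s / h⌋ : ℝ) := by
    have := (Int.sub_one_lt_floor (s / h)).le
    calc s - h = h * (s / h - 1) := by field_simp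
      _ ≤ _ := by gcongr
  calc _ ≤ ∫⁻ σ in Set.Ioc (h * (⌊s / h⌋ : ℝ)) s, ‖f σ‖ₑ := enorm_intervalIntegral_le f h1
    _ = ∫⁻ σ in Set.Ioc (h * (⌊s / h⌋ : ℝ)) s, window h s σ * ‖f σ‖ₑ := by
        refine setLIntegral_congr_fun measurableSet_Ioc fun σ hσ => ?_
        have : window h s σ = 1 := by
          simp only [window]
          exact Set.indicator_of_mem (show (s, σ) ∈ {p : ℝ × ℝ | p.1 - h < p.2 ∧ p.2 ≤ p.1} from
            ⟨h2.trans_lt hσ.1, hσ.2⟩) _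
        simp [this]
    _ ≤ _ := lintegral_mono_set (Set.Ioc_subset_Ioc h0 hs.2)

/-- Bound for a single eigenvalue `l`. -/
lemma norm_quadruple_integral_le (r K h N l : ℝ) (hh : 0 < h) (hN : 0 ≤ N) (hl : 0 < l)
    (hK0 : 0 < K)
    (hK : ∀ x, ∫⁻ y in Set.Ioc 0 N, ENNReal.ofReal (|x - y| ^ r) ≤ ENNReal.ofReal K) :
    ‖∫ s₁ in (0:ℝ)..N, ∫ s₂ in (0:ℝ)..N,
      ∫ σ₁ in (h*(⌊s₁/h⌋ : ℝ))..s₁, ∫ σ₂ in (h*(⌊s₂/h⌋ : ℝ))..s₂,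
        Real.exp (-l*(N - s₁)) * Real.exp (-l*(N - s₂)) * |σ₁ - σ₂| ^ r‖
      ≤ K * h ^ 2 * l⁻¹ := by
  set e : ℝ → ℝ≥0∞ := fun s => ENNReal.ofReal (Real.exp (-l * (N - s))) with he
  set k : ℝ → ℝ → ℝ≥0∞ := fun x y => ENNReal.ofReal (|x - y| ^ r) with hk
  have hem : Measurable e := by fun_prop
  have hkm : Measurable fun p : ℝ × ℝ => k p.1 p.2 := by
    simp only [hk]; fun_prop
  have hwm := measurable_window h
  have key := lintegral_schur (volume.restrict (Set.Ioc 0 N)) e (window h) k hem hwm hkm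
    (fun x y => by simp only [hk, abs_sub_comm]) (ENNReal.ofReal h) (ENNReal.ofReal K)
    (fun σ => lintegral_window_left h σ _) (fun s => lintegral_window_right h s _) hK
  have hbound : ‖∫ s₁ in (0:ℝ)..N, ∫ s₂ in (0:ℝ)..N,
      ∫ σ₁ in (h*(⌊s₁/h⌋ : ℝ))..s₁, ∫ σ₂ in (h*(⌊s₂/h⌋ : ℝ))..s₂,
        Real.exp (-l*(N - s₁)) * Real.exp (-l*(N - s₂)) * |σ₁ - σ₂| ^ r‖ₑ
      ≤ ENNReal.ofReal (K * h ^ 2 * l⁻¹) := by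
    calc _ ≤ ∫⁻ s₁ in Set.Ioc 0 N, ∫⁻ s₂ in Set.Ioc 0 N, e s₁ * e s₂ *
            ∫⁻ σ₁ in Set.Ioc 0 N, ∫⁻ σ₂ in Set.Ioc 0 N,
              window h s₁ σ₁ * window h s₂ σ₂ * k σ₁ σ₂ := by
          refine (enorm_intervalIntegral_le _ hN).trans ?_
          refine setLIntegral_mono' measurableSet_Ioc fun s₁ hs₁ => ?_
          refine (enorm_intervalIntegral_le _ hN).trans ?_
          refine setLIntegral_mono' measurableSet_Ioc fun s₂ hs₂ => ?_
          refine (enorm_integral_floor_le _ hh hs₁).trans ?_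
          rw [← lintegral_const_mul' _ _ (by simp [he, ENNReal.mul_eq_top])]
          refine lintegral_mono fun σ₁ => ?_
          rw [← lintegral_const_mul' _ _ (by simp [he, ENNReal.mul_eq_top])]
          refine (mul_le_mul_right (enorm_integral_floor_le _ hh hs₂) _).trans ?_
          have hw1 : window h s₁ σ₁ ≠ ⊤ := by
            simp only [window, Set.indicator]; split_ifs <;> simp
          rw [← lintegral_const_mul' _ _ hw1]
          refine lintegral_mono fun σ₂ => le_of_eq ?_
          rw [Real.enorm_of_nonneg (by positivity), ENNReal.ofReal_mul (by positivity),
            ENNReal.ofReal_mul (by positivity)]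
          simp only [he, hk]
          ring
      _ ≤ _ := key
      _ ≤ 2 * (ENNReal.ofReal h * (ENNReal.ofReal h * ENNReal.ofReal K) *
            ENNReal.ofReal (1 / (2 * l))) := by
          gcongr
          exact lintegral_exp_sq_le l N hl hN
      _ = _ := by
          rw [← ENNReal.ofReal_ofNat 2, ← ENNReal.ofReal_mul hh.le, ← ENNReal.ofReal_mul hh.le,
            ← ENNReal.ofReal_mul (by positivity), ← ENNReal.ofReal_mul (by positivity)]
          congr 1
          field_simp
  rw [← ofReal_norm] at hbound
  exact (ENNReal.ofReal_le_ofReal_iff (by positivity)).1 hbound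

/-- Summed quadruple-integral estimate: for `H ∈ (1/2,1)`, `T > 0` and `λ_i = i²π²`,
there is `C = C(H,T)` such that for every step size `h > 0` and `n ∈ ℕ` with `nh ≤ T`,
with `⌊s⌋_h := h⌊s/h⌋`,
`∑ᵢ ∫₀^{nh}∫₀^{nh}∫_{⌊s₁⌋_h}^{s₁}∫_{⌊s₂⌋_h}^{s₂}
  e^{-λ_i(nh-s₁)} e^{-λ_i(nh-s₂)} |σ₁-σ₂|^(2H-2) dσ₂ dσ₁ ds₂ ds₁ ≤ C h²`. -/
theorem quadruple_integral_estimate_summed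
    (H T : ℝ) (hH : H ∈ Set.Ioo (1/2 : ℝ) 1) (hT : 0 < T) :
    ∃ C : ℝ, 0 < C ∧ ∀ (h : ℝ) (n : ℕ), 0 < h → n*h ≤ T →
      (∑' i : ℕ,
        ∫ s₁ in (0:ℝ)..(n*h), ∫ s₂ in (0:ℝ)..(n*h),
          ∫ σ₁ in (h*(⌊s₁/h⌋ : ℝ))..s₁, ∫ σ₂ in (h*(⌊s₂/h⌋ : ℝ))..s₂,
            Real.exp (-(((i:ℝ)+1)^2 * Real.pi^2)*(n*h - s₁)) *
              Real.exp (-(((i:ℝ)+1)^2 * Real.pi^2)*(n*h - s₂)) * |σ₁ - σ₂| ^ (2*H - 2))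
      ≤ C * h^2 := by
  obtain ⟨K, hK0, hK⟩ := exists_kernel_bound (2 * H - 2) T (by linarith [hH.1]) (by linarith [hH.2])
  have hsum : Summable fun i : ℕ => (((i:ℝ)+1)^2 * Real.pi^2)⁻¹ := by
    have h1 : Summable fun i : ℕ => (((i + 1 : ℕ) : ℝ) ^ 2)⁻¹ :=
      (summable_nat_add_iff 1).2 (Real.summable_nat_pow_inv.2 one_lt_two)
    refine (h1.mul_right (Real.pi ^ 2)⁻¹).congr fun i => ?_
    push_cast
    rw [mul_inv]
  have hpos : 0 < ∑' i : ℕ, (((i:ℝ)+1)^2 * Real.pi^2)⁻¹ :=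
    hsum.tsum_pos (fun i => by positivity) 0 (by positivity)
  refine ⟨K * ∑' i : ℕ, (((i:ℝ)+1)^2 * Real.pi^2)⁻¹, by positivity, fun h n hh hn => ?_⟩
  -- The norm bound also covers the junk value of a divergent series.
  refine (le_abs_self _).trans ?_
  have hs := hsum.hasSum.mul_left (K * h ^ 2)
  rw [mul_right_comm, ← Real.norm_eq_abs]
  refine tsum_of_norm_bounded hs fun i => ?_
  exact norm_quadruple_integral_le _ K h (n * h) _ hh (by positivity) (by positivity) hK0
    fun x => hK x _ hn
end

section
/- Let H ∈ (1/2,1), T > 0, and λ_i := i²π² for integers i ≥ 1. There exists a constant C depending only on H and T such that for every step size h > 0 and every natural number n with nh ≤ T, writing ⌊s⌋_h := h·⌊s/h⌋, one has ∑_{i=1}^{∞} ∫₀^{nh} ∫₀^{nh} e^{−λ_i(nh−s₁)} e^{−λ_i(nh−s₂)} ( ∫₀^{T} ∫_{⌊s₁⌋_h}^{s₁} H(2H−1)|σ−v|^{2H−2} dσ dv ) ( ∫₀^{T} ∫_{⌊s₂⌋_h}^{s₂} H(2H−1)|σ−u|^{2H−2} dσ du ) ds₁ ds₂ ≤ C h².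 -/
/-!
The inner factor `F s = ∫₀ᵀ ∫_{⌊s⌋_h}^s φ(σ, v) dσ dv` is at most `K h`, where
`K = ∫_{-T}^T H(2H-1)|x|^(2H-2) dx` is finite because `2H - 2 > -1`. Indeed Tonelli allows the
`v`-integral to be done first; for `σ ∈ [0, T]` the translate `σ - v` stays in `[-T, T]`, so that
integral is at most `K`, and the remaining `σ`-interval has length at most `h`.

The double integral attached to an eigenvalue `l` is therefore at most
`(K h)² (∫₀^{nh} e^{-l(nh-s)} ds)² ≤ (K h)² / l²`. For `l = (i+1)²π²` this is at most
`(K h)² / (i+1)²`, which is summable in `i`.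
-/

open Real MeasureTheory

theorem intervalIntegrable_abs_rpow {p : ℝ} (hp : -1 < p) (T : ℝ) (hT : 0 < T) :
    IntervalIntegrable (fun x : ℝ => |x| ^ p) volume (-T) T := by
  have h1 : IntervalIntegrable (fun x : ℝ => |x| ^ p) volume 0 T := by
    refine (intervalIntegral.intervalIntegrable_rpow' (a := 0) (b := T) hp).congr ?_
    intro x hx
    rw [Set.uIoc_of_le hT.le] at hx
    simp only [abs_of_pos hx.1]
  have h2 : IntervalIntegrable (fun x : ℝ => |x| ^ p) volume (-T) 0 := by
    have := (IntervalIntegrable.iff_comp_neg (f := fun x : ℝ => |x| ^ p)).1 h1.symm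
    simpa using this
  exact h2.trans h1

/-- The fractional kernel integrated over `[0, T] × [a, b]` is at most a constant times `b - a`,
uniformly over subintervals `[a, b]` of `[0, T]`. -/
theorem exists_kernel_bound_s12 (H T : ℝ) (hH : H ∈ Set.Ioo (1/2 : ℝ) 1) (hT : 0 < T) :
    ∃ K : ℝ, 0 ≤ K ∧ ∀ a b : ℝ, 0 ≤ a → a ≤ b → b ≤ T →
      |∫ v in (0:ℝ)..T, ∫ σ in a..b, H * (2*H - 1) * |σ - v| ^ (2*H - 2)| ≤ K * (b - a) := by
  obtain ⟨hH1, hH2⟩ := hH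
  set f : ℝ → ENNReal := fun x => ENNReal.ofReal (H * (2*H - 1) * |x| ^ (2*H - 2)) with hf
  have hfm : Measurable f := by fun_prop
  have hfin : ∫⁻ x in Set.Ioc (-T) T, f x ≠ ⊤ := by
    have h1 := (intervalIntegrable_abs_rpow (p := 2*H-2) (by linarith) T hT).const_mul
      (H * (2*H - 1))
    rw [intervalIntegrable_iff_integrableOn_Ioc_of_le (by linarith)] at h1
    refine ((lintegral_mono fun x => ?_).trans_lt h1.2).ne
    exact Real.ofReal_le_enorm _
  refine ⟨(∫⁻ x in Set.Ioc (-T) T, f x).toReal, ENNReal.toReal_nonneg, ?_⟩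
  intro a b ha hab hb
  have hswap : ∫⁻ v in Set.Ioc 0 T, ∫⁻ σ in Set.Ioc a b, f (σ - v)
      ≤ (∫⁻ x in Set.Ioc (-T) T, f x) * ENNReal.ofReal (b - a) := by
    rw [lintegral_lintegral_swap (by fun_prop)]
    have hin : ∀ σ ∈ Set.Ioc a b, ∫⁻ v in Set.Ioc 0 T, f (σ - v)
        ≤ ∫⁻ x in Set.Ioc (-T) T, f x := by
      intro σ hσ
      rw [← lintegral_indicator measurableSet_Ioc, ← lintegral_indicator measurableSet_Ioc,
        ← lintegral_sub_left_eq_self ((Set.Ioc (-T) T).indicator f) σ]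
      -- `-T < σ - v` is strict even at `v = T` because `0 ≤ a < σ`.
      refine lintegral_mono fun v => ?_
      by_cases hv : v ∈ Set.Ioc 0 T
      · have hv' : σ - v ∈ Set.Ioc (-T) T :=
          ⟨by linarith [hv.2, hσ.1], by linarith [hv.1, hσ.2]⟩
        simp [Set.indicator_of_mem hv, Set.indicator_of_mem hv']
      · simp [Set.indicator_of_notMem hv]
    calc _ ≤ ∫⁻ _ in Set.Ioc a b, ∫⁻ x in Set.Ioc (-T) T, f x :=
          setLIntegral_mono measurable_const hin
      _ = _ := by simp
  have hnorm : ENNReal.ofReal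
      |∫ v in (0:ℝ)..T, ∫ σ in a..b, H * (2*H - 1) * |σ - v| ^ (2*H - 2)|
      ≤ ∫⁻ v in Set.Ioc 0 T, ∫⁻ σ in Set.Ioc a b, f (σ - v) := by
    rw [intervalIntegral.integral_of_le hT.le, ← Real.norm_eq_abs, ofReal_norm]
    refine (enorm_integral_le_lintegral_enorm _).trans (lintegral_mono fun v => ?_)
    rw [intervalIntegral.integral_of_le hab]
    refine (enorm_integral_le_lintegral_enorm _).trans (lintegral_mono fun σ => ?_)
    rw [Real.enorm_of_nonneg]
    have : 0 ≤ 2*H - 1 := by linarith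
    positivity
  have := ENNReal.toReal_mono (ENNReal.mul_ne_top hfin ENNReal.ofReal_ne_top) (hnorm.trans hswap)
  rwa [ENNReal.toReal_ofReal (abs_nonneg _), ENNReal.toReal_mul,
    ENNReal.toReal_ofReal (by linarith)] at this

theorem integral_exp_le (l t : ℝ) (hl : 0 < l) :
    ∫ s in (0:ℝ)..t, Real.exp (-l * (t - s)) ≤ 1 / l := by
  have h1 : ∫ s in (0:ℝ)..t, Real.exp (-l * (t - s))
      = Real.exp (-l * (t - t)) / l - Real.exp (-l * (t - 0)) / l := by
    refine intervalIntegral.integral_eq_sub_of_hasDerivAt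
      (f := fun s => Real.exp (-l * (t - s)) / l) (fun s _ => ?_)
      (Continuous.intervalIntegrable (by fun_prop) _ _)
    have h2 : HasDerivAt (fun s => Real.exp (-l * (t - s)) / l)
        (Real.exp (-l * (t - s)) * (-l * -1) / l) s :=
      (((hasDerivAt_id s).const_sub t).const_mul (-l)).exp.div_const l
    have h3 : Real.exp (-l * (t - s)) * (-l * -1) / l = Real.exp (-l * (t - s)) := by
      field_simp
    rwa [h3] at h2
  rw [h1]
  have : 0 < Real.exp (-l * (t - 0)) / l := by positivity
  simp only [sub_self, mul_zero, Real.exp_zero]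
  linarith

/-- A factor bounded by `M` in absolute value contributes at most `(M / l)²`. No measurability
of `F` is needed, since the majorant is integrable. -/
theorem abs_double_integral_le (F : ℝ → ℝ) (l t M : ℝ) (hl : 0 < l) (ht : 0 ≤ t) (hM : 0 ≤ M)
    (hF : ∀ s ∈ Set.Ioc 0 t, |F s| ≤ M) :
    |∫ s₁ in (0:ℝ)..t, ∫ s₂ in (0:ℝ)..t,
      Real.exp (-l * (t - s₁)) * Real.exp (-l * (t - s₂)) * F s₁ * F s₂| ≤ M^2 * (1 / l)^2 := by
  set E := ∫ s in (0:ℝ)..t, Real.exp (-l * (t - s)) with hE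
  have hE0 : 0 ≤ E := intervalIntegral.integral_nonneg ht fun s _ => (Real.exp_pos _).le
  have hE1 : E ≤ 1 / l := integral_exp_le l t hl
  have hinner : ∀ s₁ ∈ Set.Ioc 0 t, ‖∫ s₂ in (0:ℝ)..t,
      Real.exp (-l * (t - s₁)) * Real.exp (-l * (t - s₂)) * F s₁ * F s₂‖
      ≤ (M^2 * E) * Real.exp (-l * (t - s₁)) := by
    intro s₁ hs₁
    calc _ ≤ ∫ s₂ in (0:ℝ)..t, (Real.exp (-l * (t - s₁)) * M^2) * Real.exp (-l * (t - s₂)) := by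
          refine intervalIntegral.norm_integral_le_of_norm_le ht
            (Filter.Eventually.of_forall fun s₂ hs₂ => ?_)
            (Continuous.intervalIntegrable (by fun_prop) _ _)
          rw [Real.norm_eq_abs, abs_mul, abs_mul, abs_mul, Real.abs_exp, Real.abs_exp]
          calc _ ≤ Real.exp (-l * (t - s₁)) * Real.exp (-l * (t - s₂)) * M * M := by
                gcongr
                · exact hF _ hs₁
                · exact hF _ hs₂
            _ = _ := by ring
      _ = _ := by rw [intervalIntegral.integral_const_mul, ← hE]; ring
  calc _ ≤ ∫ s₁ in (0:ℝ)..t, (M^2 * E) * Real.exp (-l * (t - s₁)) :=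
        intervalIntegral.norm_integral_le_of_norm_le ht
          (Filter.Eventually.of_forall hinner)
          (Continuous.intervalIntegrable (by fun_prop) _ _)
    _ = M^2 * E^2 := by rw [intervalIntegral.integral_const_mul, ← hE]; ring
    _ ≤ _ := by gcongr

/-- Summed Malliavin-derivative contribution estimate: for `H ∈ (1/2,1)`, `T > 0` and
`λ_i = i²π²`, there is `C = C(H,T)` such that for every step size `h > 0` and `n ∈ ℕ`
with `nh ≤ T`, with `⌊s⌋_h := h⌊s/h⌋`,
`∑ᵢ ∫₀^{nh}∫₀^{nh} e^{-λ_i(nh-s₁)} e^{-λ_i(nh-s₂)}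
    (∫₀ᵀ∫_{⌊s₁⌋_h}^{s₁} H(2H-1)|σ-v|^(2H-2) dσ dv)
    (∫₀ᵀ∫_{⌊s₂⌋_h}^{s₂} H(2H-1)|σ-u|^(2H-2) dσ du) ds₁ ds₂ ≤ C h²`. -/
theorem malliavin_contribution_estimate_summed
    (H T : ℝ) (hH : H ∈ Set.Ioo (1/2 : ℝ) 1) (hT : 0 < T) :
    ∃ C : ℝ, 0 < C ∧ ∀ (h : ℝ) (n : ℕ), 0 < h → n*h ≤ T →
      (∑' i : ℕ,
        ∫ s₁ in (0:ℝ)..(n*h), ∫ s₂ in (0:ℝ)..(n*h),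
          Real.exp (-(((i:ℝ)+1)^2 * Real.pi^2)*(n*h - s₁)) *
            Real.exp (-(((i:ℝ)+1)^2 * Real.pi^2)*(n*h - s₂)) *
            (∫ v in (0:ℝ)..T, ∫ σ in (h*(⌊s₁/h⌋ : ℝ))..s₁,
              H * (2*H - 1) * |σ - v| ^ (2*H - 2)) *
            (∫ u in (0:ℝ)..T, ∫ σ in (h*(⌊s₂/h⌋ : ℝ))..s₂,
              H * (2*H - 1) * |σ - u| ^ (2*H - 2)))
      ≤ C * h^2 := by
  obtain ⟨K, hK, hbound⟩ := exists_kernel_bound_s12 H T hH hT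
  have hS : Summable fun i : ℕ => (1 / ((i:ℝ) + 1)) ^ 2 := by
    have := (summable_nat_add_iff 1).2 (Real.summable_one_div_nat_pow.2 (one_lt_two))
    refine this.congr fun i => ?_
    push_cast
    rw [div_pow, one_pow]
  set S := ∑' i : ℕ, (1 / ((i:ℝ) + 1)) ^ 2 with hSdef
  have hS0 : 0 ≤ S := tsum_nonneg fun i => by positivity
  refine ⟨K^2 * S + 1, by positivity, fun h n hh hn => ?_⟩
  have hF : ∀ s ∈ Set.Ioc 0 (n*h), |∫ v in (0:ℝ)..T, ∫ σ in (h*(⌊s/h⌋ : ℝ))..s,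
      H * (2*H - 1) * |σ - v| ^ (2*H - 2)| ≤ K * h := by
    intro s hs
    have h0 : (0:ℝ) ≤ ⌊s/h⌋ := by
      exact_mod_cast Int.floor_nonneg.2 (div_nonneg hs.1.le hh.le)
    have h1 : h * (⌊s/h⌋ : ℝ) ≤ s := by
      rw [mul_comm, ← le_div_iff₀ hh]
      exact Int.floor_le _
    have h2 : s - h * (⌊s/h⌋ : ℝ) ≤ h := by
      have := (div_lt_iff₀ hh).1 (Int.lt_floor_add_one (s/h))
      linarith
    exact (hbound _ _ (mul_nonneg hh.le h0) h1 (hs.2.trans hn)).trans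
      (mul_le_mul_of_nonneg_left h2 hK)
  refine (Real.le_norm_self _).trans ((tsum_of_norm_bounded (hS.hasSum.mul_left ((K*h)^2))
    fun i => ?_).trans ?_)
  · refine (abs_double_integral_le _ _ _ (K*h) (by positivity) (by positivity) (by positivity)
      hF).trans ?_
    have hpi : 1 ≤ Real.pi ^ 2 := one_le_pow₀ (by linarith [Real.pi_gt_three])
    have hi : (1:ℝ) ≤ i + 1 := by linarith [Nat.cast_nonneg (α := ℝ) i]
    have hle : (i:ℝ) + 1 ≤ ((i:ℝ)+1)^2 * Real.pi^2 := by nlinarith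
    gcongr
  · rw [← hSdef]
    nlinarith [sq_nonneg h]
end
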